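/- A point x ∈ T⁷ is a fixed point of γ if and only if 2x₁ = 0, 2x₃ = 0, 2x₅ = ½ and 2x₇ = ½ in ℝ/ℤ; consequently the fixed point set of γ is a disjoint union of 16 three-dimensional subtori of T⁷. -/

import Mathlib

/-- The 7-torus `T⁷ = (ℝ/ℤ)⁷`. -/
abbrev T7 : Type := Fin 7 → AddCircle (1 : ℝ)

/-- The element `½ ∈ ℝ/ℤ`. -/
noncomputable def half : AddCircle (1 : ℝ) := ((1 / 2 : ℝ) : AddCircle (1 : ℝ))

/-- `α(x) = (x₁, x₂, x₃, −x₄, −x₅, −x₆, −x₇)` on `T⁷` (with 0-based indexing). -/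
noncomputable def tα : T7 → T7 := fun x => ![x 0, x 1, x 2, -x 3, -x 4, -x 5, -x 6]

/-- `β(x) = (x₁, −x₂, −x₃, x₄, x₅, ½−x₆, −x₇)` on `T⁷` (with 0-based indexing). -/
noncomputable def tβ : T7 → T7 := fun x => ![x 0, -x 1, -x 2, x 3, x 4, half - x 5, -x 6]

/-- `γ(x) = (−x₁, x₂, −x₃, x₄, ½−x₅, x₆, ½−x₇)` on `T⁷` (with 0-based indexing). -/
noncomputable def tγ : T7 → T7 := fun x => ![-x 0, x 1, -x 2, x 3, half - x 4, x 5, half - x 6]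

lemma tα_invol : Function.Involutive tα := by
  intro x; funext i
  fin_cases i
  · rfl
  · rfl
  · rfl
  · exact neg_neg _
  · exact neg_neg _
  · exact neg_neg _
  · exact neg_neg _

lemma tβ_invol : Function.Involutive tβ := by
  intro x; funext i
  fin_cases i
  · rfl
  · exact neg_neg _
  · exact neg_neg _
  · rfl
  · rfl
  · exact sub_sub_cancel _ _
  · exact neg_neg _

lemma tγ_invol : Function.Involutive tγ := by
  intro x; funext i
  fin_cases i
  · exact neg_neg _
  · rfl
  · exact neg_neg _
  · rfl
  · exact sub_sub_cancel _ _
  · rfl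
  · exact sub_sub_cancel _ _

/-- `α` as a bijection (element of the group of bijections) of `T⁷`. -/
noncomputable def pα : Equiv.Perm T7 := Function.Involutive.toPerm tα tα_invol

/-- `β` as a bijection (element of the group of bijections) of `T⁷`. -/
noncomputable def pβ : Equiv.Perm T7 := Function.Involutive.toPerm tβ tβ_invol

/-- `γ` as a bijection (element of the group of bijections) of `T⁷`. -/
noncomputable def pγ : Equiv.Perm T7 := Function.Involutive.toPerm tγ tγ_invol

lemma half_ne_zero' : half ≠ 0 := by
  intro h
  unfold half at h
  rw [AddCircle.coe_eq_zero_iff] at h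
  obtain ⟨n, hn⟩ := h
  have h2 : ((2 * n : ℤ) : ℝ) = ((1 : ℤ) : ℝ) := by
    push_cast
    simp only [zsmul_eq_mul, mul_one] at hn
    linarith
  have := Int.cast_injective h2
  omega

lemma half_add_half : half + half = 0 := by
  unfold half
  rw [← AddCircle.coe_add, AddCircle.coe_eq_zero_iff]
  exact ⟨1, by norm_num⟩

lemma add_self_zero_iff (a : AddCircle (1 : ℝ)) : a + a = 0 ↔ a = 0 ∨ a = half := by
  constructor
  · intro h
    induction a using QuotientAddGroup.induction_on with
    | H r =>
      have h' : ((r + r : ℝ) : AddCircle (1 : ℝ)) = 0 := h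
      rw [AddCircle.coe_eq_zero_iff] at h'
      obtain ⟨n, hn⟩ := h'
      simp only [zsmul_eq_mul, mul_one] at hn
      rcases Int.even_or_odd' n with ⟨k, hk | hk⟩
      · left
        refine (AddCircle.coe_eq_zero_iff (1 : ℝ)).2 ⟨k, ?_⟩
        rw [hk] at hn
        push_cast at hn
        simp only [zsmul_eq_mul, mul_one]
        linarith
      · right
        rw [← sub_eq_zero]
        unfold half
        have : ((r - 1 / 2 : ℝ) : AddCircle (1 : ℝ)) = 0 := by
          refine (AddCircle.coe_eq_zero_iff (1 : ℝ)).2 ⟨k, ?_⟩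
          rw [hk] at hn
          push_cast at hn
          simp only [zsmul_eq_mul, mul_one]
          linarith
        exact this
  · rintro (rfl | rfl)
    · simp
    · exact half_add_half

/-- The element `¼ ∈ ℝ/ℤ`. -/
noncomputable def quarter : AddCircle (1 : ℝ) := ((1 / 4 : ℝ) : AddCircle (1 : ℝ))

lemma quarter_add_quarter : quarter + quarter = half := by
  unfold quarter half
  rw [← AddCircle.coe_add]
  norm_num

/-- The two points of order dividing two. -/
noncomputable def eB (b : Bool) : AddCircle (1 : ℝ) := if b then half else 0

lemma eB_inj : Function.Injective eB := by
  intro a b h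
  have := half_ne_zero'
  cases a <;> cases b <;> simp_all [eB, eq_comm]

lemma add_self_zero_iff' (a : AddCircle (1 : ℝ)) : a + a = 0 ↔ ∃ b, a = eB b := by
  rw [add_self_zero_iff]
  simp [eB]

lemma add_self_half_iff (a : AddCircle (1 : ℝ)) :
    a + a = half ↔ ∃ b, a = quarter + eB b := by
  have h := add_self_zero_iff' (a - quarter)
  have e : a - quarter + (a - quarter) = a + a - half := by
    rw [← quarter_add_quarter]; abel
  rw [e, sub_eq_zero] at h
  rw [h]
  simp only [sub_eq_iff_eq_add']

lemma fixed_iff (x : T7) : tγ x = x ↔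
    (x 0 + x 0 = 0 ∧ x 2 + x 2 = 0 ∧ x 4 + x 4 = half ∧ x 6 + x 6 = half) := by
  constructor
  · intro h
    have h0 : -x 0 = x 0 := congrFun h 0
    have h2 : -x 2 = x 2 := congrFun h 2
    have h4 : half - x 4 = x 4 := congrFun h 4
    have h6 : half - x 6 = x 6 := congrFun h 6
    exact ⟨neg_eq_iff_add_eq_zero.1 h0, neg_eq_iff_add_eq_zero.1 h2,
      (sub_eq_iff_eq_add.1 h4).symm, (sub_eq_iff_eq_add.1 h6).symm⟩
  · rintro ⟨h0, h2, h4, h6⟩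
    funext i
    fin_cases i
    · exact neg_eq_iff_add_eq_zero.2 h0
    · rfl
    · exact neg_eq_iff_add_eq_zero.2 h2
    · rfl
    · exact sub_eq_iff_eq_add.2 h4.symm
    · rfl
    · exact sub_eq_iff_eq_add.2 h6.symm

/-- `x` is a fixed point of `γ` iff `2x₁ = 0, 2x₃ = 0, 2x₅ = ½, 2x₇ = ½` in `ℝ/ℤ`; consequently
the fixed point set of `γ` is a disjoint union of 16 three-dimensional subtori of `T⁷`
(coordinate slices in the coordinates `x₁, x₃, x₅, x₇`, i.e. 0-based indices 0,2,4,6). -/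
theorem statement8 :
    (∀ x : T7, tγ x = x ↔
      (x 0 + x 0 = 0 ∧ x 2 + x 2 = 0 ∧ x 4 + x 4 = half ∧ x 6 + x 6 = half)) ∧
    ∃ F : Fin 16 → Set T7,
      ({x : T7 | tγ x = x} = ⋃ i, F i) ∧
      (Pairwise fun i j => Disjoint (F i) (F j)) ∧
      (∀ i, (F i).Nonempty) ∧
      (∀ i, ∃ a b c d : AddCircle (1 : ℝ),
        F i = {x : T7 | x 0 = a ∧ x 2 = b ∧ x 4 = c ∧ x 6 = d}) := by
  refine ⟨fixed_iff, ?_⟩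
  let g : Fin 16 ≃ Bool × Bool × Bool × Bool := 
    (Fintype.equivFinOfCardEq (by simp)).symm
  refine ⟨fun i => {x : T7 | x 0 = eB (g i).1 ∧ x 2 = eB (g i).2.1 ∧
    x 4 = quarter + eB (g i).2.2.1 ∧ x 6 = quarter + eB (g i).2.2.2}, ?_, ?_, ?_, ?_⟩
  · ext x
    rw [Set.mem_setOf_eq, fixed_iff, add_self_zero_iff', add_self_zero_iff',
      add_self_half_iff, add_self_half_iff, Set.mem_iUnion]
    constructor
    · rintro ⟨⟨a, ha⟩, ⟨b, hb⟩, ⟨c, hc⟩, ⟨d, hd⟩⟩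
      refine ⟨g.symm (a, b, c, d), ?_⟩
      simp only [Set.mem_setOf_eq, Equiv.apply_symm_apply]
      exact ⟨ha, hb, hc, hd⟩
    · rintro ⟨i, ha, hb, hc, hd⟩
      exact ⟨⟨_, ha⟩, ⟨_, hb⟩, ⟨_, hc⟩, ⟨_, hd⟩⟩
  · intro i j hij
    rw [Set.disjoint_left]
    rintro x ⟨ha, hb, hc, hd⟩ ⟨ha', hb', hc', hd'⟩
    apply hij
    apply g.injective
    exact Prod.ext (eB_inj (ha.symm.trans ha')) (Prod.ext (eB_inj (hb.symm.trans hb'))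
      (Prod.ext (eB_inj (add_left_cancel (hc.symm.trans hc')))
        (eB_inj (add_left_cancel (hd.symm.trans hd')))))
  · intro i
    exact ⟨![eB (g i).1, 0, eB (g i).2.1, 0, quarter + eB (g i).2.2.1, 0,
      quarter + eB (g i).2.2.2], rfl, rfl, rfl, rfl⟩
  · intro i
    exact ⟨_, _, _, _, rfl⟩
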